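/- Let G be a finite connected graph on n vertices and m edges in which every vertex has even degree, with minimum degree δ and maximum degree Δ, and suppose G is ℓ-good. Then there exist constants c, C > 0 such that, setting τ* = C·m·(1 + Δ·log n/(δ·min(ℓ, log n)·(1−λmax))), for every rule A and every start vertex, the probability that some vertex of G remains unvisited after τ* steps of the E-process is at most c/n^3. In particular, if Δ is bounded by a constant, then τ* = B·n·(1 + log n/(min(ℓ, log n)·(1−λmax))) for a constant B, and this value of τ* is independent of the rule A. -/

import Mathlib

open scoped ENNReal Classical

-- `lambdaMax P` : the largest absolute value of an eigenvalue of `P` other than the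
-- eigenvalue `1` (for an ergodic chain on a connected graph, `max(|λ₂|,…,|λₙ|)`).
noncomputable def lambdaMax {V : Type*} [Fintype V] [DecidableEq V] (P : Matrix V V ℝ) : ℝ :=
  sSup {x : ℝ | ∃ μ ∈ spectrum ℝ P, μ ≠ 1 ∧ x = |μ|}

-- Transition matrix of the lazy simple random walk on `G`.
noncomputable def lazyMatrix {V : Type*} [Fintype V] [DecidableEq V] (G : SimpleGraph V) :
    Matrix V V ℝ :=
  Matrix.of fun u v =>
    (if u = v then (1 : ℝ) / 2 else 0) +
      (if G.Adj u v then 1 / (2 * ((G.neighborSet u).ncard : ℝ)) else 0)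

-- The edges traversed by a history `h = [Xₜ, Xₜ₋₁, …, X₀]` (most recent vertex first).
def trav {V : Type*} (h : List V) : List (Sym2 V) :=
  (h.zip h.tail).map fun p => s(p.1, p.2)

-- One-step transition probabilities of the E-process with edge-selection rule `A`.
noncomputable def eStep {V : Type*} [Fintype V] (G : SimpleGraph V) (A : List V → V) :
    List V → V → ℝ
  | [], _ => 0
  | (v :: h), x =>
      if ∃ y : V, G.Adj v y ∧ s(v, y) ∉ trav (v :: h) then
        (if x = A (v :: h) then 1 else 0)
      else if G.Adj v x then 1 / ((G.neighborSet v).ncard : ℝ) else 0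

-- A rule is valid if, whenever the current vertex has an untraversed incident edge, it
-- selects a neighbour along such an untraversed edge.
def ValidRule {V : Type*} (G : SimpleGraph V) (A : List V → V) : Prop :=
  ∀ (v : V) (h : List V), (∃ y : V, G.Adj v y ∧ s(v, y) ∉ trav (v :: h)) →
    G.Adj v (A (v :: h)) ∧ s(v, A (v :: h)) ∉ trav (v :: h)

-- Probability that the E-process started at `u` produces the history `h`.
noncomputable def trajProb {V : Type*} [Fintype V] (G : SimpleGraph V) (A : List V → V)
    (u : V) : List V → ℝ
  | [] => 0
  | [x] => if x = u then 1 else 0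
  | (x :: y :: h) => eStep G A (y :: h) x * trajProb G A u (y :: h)

-- Probability that the E-process started at `u` has not visited every vertex by time `t`.
noncomputable def uncovProb {V : Type*} [Fintype V] (G : SimpleGraph V) (A : List V → V)
    (u : V) (t : ℕ) : ℝ :=
  ∑ f : Fin (t + 1) → V,
    if ∀ x : V, ∃ i, f i = x then 0 else trajProb G A u (List.ofFn f)

-- `G` is `ℓ`-good: for every vertex `v`, every nonempty subgraph of `G` in which every
-- vertex has even degree and which contains all edges of `G` incident with `v` has at
-- least `ℓ` vertices.
def EvenSubgraphGood {V : Type*} [Fintype V] (G : SimpleGraph V) (ℓ : ℕ) : Prop :=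
  ∀ (v : V) (H : G.Subgraph), H.verts.Nonempty →
    (∀ e ∈ G.edgeSet, v ∈ e → e ∈ H.edgeSet) →
    (∀ x : V, Even ((H.neighborSet x).ncard)) →
    ℓ ≤ H.verts.ncard

noncomputable def ad {V : Type*} (G : SimpleGraph V) (x y : V) : ℝ := if G.Adj x y then 1 else 0

noncomputable def dg {V : Type*} (G : SimpleGraph V) (x : V) : ℝ := ((G.neighborSet x).ncard : ℝ)

lemma ad_symm {V : Type*} (G : SimpleGraph V) (x y : V) : ad G x y = ad G y x := by
  simp [ad, G.adj_comm]

lemma ad_nonneg {V : Type*} (G : SimpleGraph V) (x y : V) : 0 ≤ ad G x y := by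
  unfold ad; split_ifs <;> norm_num

lemma sum_ad {V : Type*} [Fintype V] (G : SimpleGraph V) (x : V) : ∑ y, ad G x y = dg G x := by
  unfold ad dg
  rw [Set.ncard_eq_toFinset_card']
  rw [Finset.sum_boole]
  congr 2
  ext y; simp

lemma sum_sq_pm {V : Type*} [Fintype V] (G : SimpleGraph V) (f : V → ℝ) (c : ℝ) (hc : c ^ 2 = 1) :
    ∑ x, ∑ y, ad G x y * (f x + c * f y) ^ 2 =
      2 * ∑ x, dg G x * f x ^ 2 + 2 * c * ∑ x, f x * ∑ y, ad G x y * f y := by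
  have h1 : ∑ x, ∑ y, ad G x y * f x ^ 2 = ∑ x, dg G x * f x ^ 2 := by
    refine Finset.sum_congr rfl fun x _ => ?_
    rw [← Finset.sum_mul, sum_ad]
  have h2 : ∑ x, ∑ y, ad G x y * f y ^ 2 = ∑ x, dg G x * f x ^ 2 := by
    rw [Finset.sum_comm, ← h1]
    refine Finset.sum_congr rfl fun x _ => Finset.sum_congr rfl fun y _ => ?_
    rw [ad_symm]
  calc ∑ x, ∑ y, ad G x y * (f x + c * f y) ^ 2
      = ∑ x, ∑ y, (ad G x y * f x ^ 2 + ad G x y * f y ^ 2 + 2 * c * (f x * (ad G x y * f y))) := by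
        refine Finset.sum_congr rfl fun x _ => Finset.sum_congr rfl fun y _ => ?_
        linear_combination (ad G x y * f y ^ 2) * hc
    _ = _ := by
        simp only [Finset.sum_add_distrib, h1, h2, Finset.mul_sum]
        rw [← two_mul, Finset.mul_sum]

lemma lazy_mulVec {V : Type*} [Fintype V] [DecidableEq V] (G : SimpleGraph V) (f : V → ℝ) (x : V) :
    (lazyMatrix G).mulVec f x = f x / 2 + (∑ y, ad G x y * f y) / (2 * dg G x) := by
  simp only [lazyMatrix, Matrix.mulVec, dotProduct, Matrix.of_apply, add_mul,
    Finset.sum_add_distrib]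
  congr 1
  · simp; ring
  · rw [Finset.sum_div]
    refine Finset.sum_congr rfl fun y _ => ?_
    unfold ad dg
    split_ifs <;> simp; ring

lemma eig_id {V : Type*} [Fintype V] [DecidableEq V] (G : SimpleGraph V)
    (hd : ∀ x, 0 < dg G x) (f : V → ℝ) (μ : ℝ) (h : (lazyMatrix G).mulVec f = μ • f) :
    ∑ x, f x * ∑ y, ad G x y * f y = (2 * μ - 1) * ∑ x, dg G x * f x ^ 2 := by
  rw [Finset.mul_sum]
  refine Finset.sum_congr rfl fun x _ => ?_
  have := congrFun h x
  rw [lazy_mulVec] at this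
  have hx := hd x
  simp only [Pi.smul_apply, smul_eq_mul] at this
  field_simp at this
  linear_combination f x * this

lemma mem_spec_iff {V : Type*} [Fintype V] [DecidableEq V] (P : Matrix V V ℝ) (μ : ℝ) :
    μ ∈ spectrum ℝ P ↔ ∃ f : V → ℝ, f ≠ 0 ∧ P.mulVec f = μ • f := by
  rw [← Matrix.spectrum_toLin', ← Module.End.hasEigenvalue_iff_mem_spectrum]
  constructor
  · intro h
    obtain ⟨f, hf⟩ := h.exists_hasEigenvector
    exact ⟨f, hf.2, by simpa using hf.apply_eq_smul⟩
  · rintro ⟨f, hf, h⟩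
    exact Module.End.hasEigenvalue_of_hasEigenvector (x := f)
      (Module.End.hasEigenvector_iff.mpr ⟨Module.End.mem_eigenspace_iff.mpr (by simpa using h), hf⟩)

lemma norm_pos' {V : Type*} [Fintype V] (G : SimpleGraph V)
    (hd : ∀ x, 0 < dg G x) (f : V → ℝ) (hf : f ≠ 0) : 0 < ∑ x, dg G x * f x ^ 2 := by
  obtain ⟨x, hx⟩ := Function.ne_iff.mp hf
  refine Finset.sum_pos' (fun y _ => mul_nonneg (hd y).le (sq_nonneg _)) ⟨x, Finset.mem_univ _, ?_⟩
  have : f x ≠ 0 := hx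
  have := hd x
  positivity

lemma eig_range {V : Type*} [Fintype V] [DecidableEq V] (G : SimpleGraph V)
    (hd : ∀ x, 0 < dg G x) (μ : ℝ) (h : μ ∈ spectrum ℝ (lazyMatrix G)) : 0 ≤ μ ∧ μ ≤ 1 := by
  obtain ⟨f, hf, h⟩ := (mem_spec_iff _ _).mp h
  have hp := norm_pos' G hd f hf
  have e := eig_id G hd f μ h
  have h1 := sum_sq_pm G f 1 (by norm_num)
  have h2 := sum_sq_pm G f (-1) (by norm_num)
  have n1 : 0 ≤ ∑ x, ∑ y, ad G x y * (f x + 1 * f y) ^ 2 :=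
    Finset.sum_nonneg fun x _ => Finset.sum_nonneg fun y _ => mul_nonneg (ad_nonneg _ _ _) (sq_nonneg _)
  have n2 : 0 ≤ ∑ x, ∑ y, ad G x y * (f x + (-1) * f y) ^ 2 :=
    Finset.sum_nonneg fun x _ => Finset.sum_nonneg fun y _ => mul_nonneg (ad_nonneg _ _ _) (sq_nonneg _)
  rw [h1, e] at n1
  rw [h2, e] at n2
  constructor <;> nlinarith

lemma eig_one_const {V : Type*} [Fintype V] [DecidableEq V] (G : SimpleGraph V) (hG : G.Connected)
    (hd : ∀ x, 0 < dg G x) (f : V → ℝ) (h : (lazyMatrix G).mulVec f = f) (x y : V) : f x = f y := by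
  have e := eig_id G hd f 1 (by simpa using h)
  have h2 := sum_sq_pm G f (-1) (by norm_num)
  have hz : ∑ x, ∑ y, ad G x y * (f x + (-1) * f y) ^ 2 = 0 := by rw [h2, e]; ring
  have hadj : ∀ a b, G.Adj a b → f a = f b := by
    intro a b hab
    have n2 : ∀ x y, 0 ≤ ad G x y * (f x + (-1) * f y) ^ 2 :=
      fun x y => mul_nonneg (ad_nonneg _ _ _) (sq_nonneg _)
    rw [Finset.sum_eq_zero_iff_of_nonneg (fun x _ => Finset.sum_nonneg fun y _ => n2 x y)] at hz
    have := hz a (Finset.mem_univ _)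
    rw [Finset.sum_eq_zero_iff_of_nonneg (fun y _ => n2 a y)] at this
    have := this b (Finset.mem_univ _)
    simp only [ad, hab, if_true, one_mul] at this
    have := pow_eq_zero_iff (two_ne_zero) |>.mp this
    linarith
  obtain ⟨w⟩ := hG.preconnected x y
  induction w with
  | nil => rfl
  | cons hab _ ih => exact (hadj _ _ hab).trans ih

lemma lamSet_finite {V : Type*} [Fintype V] [DecidableEq V] (P : Matrix V V ℝ) :
    {x : ℝ | ∃ μ ∈ spectrum ℝ P, μ ≠ 1 ∧ x = |μ|}.Finite := by
  have : (spectrum ℝ P).Finite := by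
    rw [← Matrix.spectrum_toLin']; exact Module.End.finite_spectrum _
  refine (this.image (fun x => |x|)).subset ?_
  rintro x ⟨μ, h, _, rfl⟩
  exact ⟨μ, h, rfl⟩

lemma lam_lt_one {V : Type*} [Fintype V] [DecidableEq V] (G : SimpleGraph V)
    (hd : ∀ x, 0 < dg G x) : lambdaMax (lazyMatrix G) < 1 := by
  unfold lambdaMax
  rcases Set.eq_empty_or_nonempty {x : ℝ | ∃ μ ∈ spectrum ℝ (lazyMatrix G), μ ≠ 1 ∧ x = |μ|} with h | h
  · rw [h]; simp
  · obtain ⟨μ, hμ, h1, h2⟩ := h.csSup_mem (lamSet_finite _)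
    rw [h2]
    have := eig_range G hd μ hμ
    rw [abs_of_nonneg this.1]
    exact lt_of_le_of_ne this.2 h1

lemma lam_nonneg {V : Type*} [Fintype V] [DecidableEq V] (P : Matrix V V ℝ) : 0 ≤ lambdaMax P := by
  unfold lambdaMax
  apply Real.sSup_nonneg
  rintro x ⟨μ, _, _, rfl⟩
  positivity

lemma quad_bound {V : Type*} [Fintype V] [DecidableEq V] (G : SimpleGraph V) (hG : G.Connected)
    (hd : ∀ x, 0 < dg G x) (f : V → ℝ) :
    (∑ x, dg G x * f x ^ 2 + ∑ x, f x * ∑ y, ad G x y * f y) / 2 ≤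
      lambdaMax (lazyMatrix G) * ∑ x, dg G x * f x ^ 2 +
      (1 - lambdaMax (lazyMatrix G)) * (∑ x, dg G x * f x) ^ 2 / ∑ x, dg G x := by
  set lam := lambdaMax (lazyMatrix G) with hlam
  set M := ∑ x, dg G x with hM
  have : Nonempty V := hG.nonempty
  have hMpos : 0 < M := Finset.sum_pos (fun x _ => hd x) Finset.univ_nonempty
  let K : V → V → ℝ := fun x y => (lam - 1/2) * (if x = y then dg G x else 0) - ad G x y / 2
    + (1 - lam) * (dg G x * dg G y) / M
  have hK : ∀ (f : V → ℝ) x, ∑ y, K x y * f y = (lam - 1/2) * (dg G x * f x)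
      - (∑ y, ad G x y * f y) / 2 + (1 - lam) * dg G x * (∑ y, dg G y * f y) / M := by
    intro f x
    have h0 : ∀ y, K x y * f y = (lam - 1/2) * (if x = y then dg G x * f y else 0)
        - ad G x y * f y / 2 + (1 - lam) * dg G x / M * (dg G y * f y) := by
      intro y
      simp only [K]
      split_ifs <;> ring
    simp only [h0, Finset.sum_add_distrib, Finset.sum_sub_distrib]
    rw [← Finset.mul_sum, ← Finset.mul_sum, ← Finset.sum_div]
    simp only [Finset.sum_ite_eq, Finset.mem_univ, if_true]
    ring
  let N : Matrix V V ℝ := Matrix.of fun x y => K x y / (√(dg G x) * √(dg G y))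
  have hs : ∀ x, 0 < √(dg G x) := fun x => Real.sqrt_pos.mpr (hd x)
  have hss : ∀ x, √(dg G x) * √(dg G x) = dg G x := fun x => Real.mul_self_sqrt (hd x).le
  have hN : N.IsHermitian := by
    ext x y
    simp only [N, K, Matrix.conjTranspose_apply, Matrix.of_apply, star_trivial]
    rw [ad_symm G y x]
    by_cases h : x = y
    · subst h; rfl
    · simp [h, Ne.symm h]; ring
  have key : ∀ (z : V → ℝ) (e : ℝ), z ≠ 0 → N.mulVec z = e • z → 0 ≤ e := by
    intro z e hz he
    by_contra hneg
    push Not at hneg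
    set f : V → ℝ := fun x => z x / √(dg G x) with hf
    have hf0 : f ≠ 0 := by
      obtain ⟨x, hx⟩ := Function.ne_iff.mp hz
      exact Function.ne_iff.mpr ⟨x, div_ne_zero hx (hs x).ne'⟩
    have h1 : ∀ x, ∑ y, K x y * f y = e * (dg G x * f x) := by
      intro x
      have := congrFun he x
      simp only [N, Matrix.mulVec, dotProduct, Matrix.of_apply, Pi.smul_apply, smul_eq_mul] at this
      have h2 : ∑ y, K x y * f y = √(dg G x) * ∑ y, K x y / (√(dg G x) * √(dg G y)) * z y := by
        rw [Finset.mul_sum]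
        refine Finset.sum_congr rfl fun y _ => ?_
        have := hs x; have := hs y
        simp only [hf]; field_simp
      rw [h2, this]
      have := hs x
      simp only [hf]
      rw [← hss x]; 
      have h3 : √(√(dg G x) * √(dg G x)) = √(dg G x) := by rw [hss]
      rw [h3]
      field_simp
    have hsum0 : ∑ x, dg G x * f x = 0 := by
      have : ∑ x, ∑ y, K x y * f y = e * ∑ x, dg G x * f x := by
        rw [Finset.mul_sum]; exact Finset.sum_congr rfl fun x _ => h1 x
      have h2 : ∑ x, ∑ y, K x y * f y = 0 := by
        simp only [hK, Finset.sum_add_distrib, Finset.sum_sub_distrib]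
        rw [← Finset.mul_sum, ← Finset.sum_div, Finset.sum_comm (f := fun x y => ad G x y * f y)]
        have h3 : ∑ y, ∑ x, ad G x y * f y = ∑ y, dg G y * f y := by
          refine Finset.sum_congr rfl fun y _ => ?_
          rw [← Finset.sum_mul, ← sum_ad]
          congr 1
          exact Finset.sum_congr rfl fun x _ => ad_symm _ _ _
        have h4 : ∑ x, (1 - lam) * dg G x * (∑ y, dg G y * f y) / M = (1 - lam) * ∑ y, dg G y * f y := by
          rw [← Finset.sum_div, ← Finset.sum_mul, ← Finset.mul_sum, ← hM]
          field_simp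
        rw [h3, h4]; ring
      rw [h2] at this
      rcases mul_eq_zero.mp this.symm with h | h
      · linarith
      · exact h
    have hL : (lazyMatrix G).mulVec f = (lam - e) • f := by
      ext x
      have := h1 x
      rw [hK, hsum0, mul_zero, zero_div, add_zero] at this
      rw [lazy_mulVec]
      have hx := hd x
      simp only [Pi.smul_apply, smul_eq_mul]
      field_simp
      field_simp at this
      linarith
    have hmem : lam - e ∈ spectrum ℝ (lazyMatrix G) := (mem_spec_iff _ _).mpr ⟨f, hf0, hL⟩
    by_cases h1' : lam - e = 1
    · rw [h1', one_smul] at hL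
      have hc := eig_one_const G hG hd f hL
      obtain ⟨x0⟩ := this
      have : ∑ x, dg G x * f x = M * f x0 := by
        rw [hM, Finset.sum_mul]; exact Finset.sum_congr rfl fun x _ => by rw [hc x x0]
      rw [hsum0] at this
      have hfx : f x0 = 0 := by
        rcases mul_eq_zero.mp this.symm with h | h
        · linarith
        · exact h
      exact hf0 (funext fun x => by rw [hc x x0, hfx]; rfl)
    · have : |lam - e| ≤ lam := le_csSup (lamSet_finite _).bddAbove ⟨lam - e, hmem, h1', rfl⟩
      have := le_abs_self (lam - e)
      linarith
  have hpsd : N.PosSemidef := by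
    rw [hN.posSemidef_iff_eigenvalues_nonneg]
    intro i
    have := hN.mulVec_eigenvectorBasis i
    refine key _ _ ?_ this
    intro h0
    have h1 := (hN.eigenvectorBasis).orthonormal.1 i
    have : hN.eigenvectorBasis i = 0 := by ext x; exact congrFun h0 x
    rw [this] at h1; simp at h1
  have hfin := hpsd.dotProduct_mulVec_nonneg (fun x => √(dg G x) * f x)
  have hEq : dotProduct (star fun x => √(dg G x) * f x) (N.mulVec fun x => √(dg G x) * f x)
      = ∑ x, f x * ∑ y, K x y * f y := by
    simp only [dotProduct, Matrix.mulVec, N, Matrix.of_apply, Pi.star_apply, star_trivial]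
    refine Finset.sum_congr rfl fun x _ => ?_
    rw [Finset.mul_sum, Finset.mul_sum]
    refine Finset.sum_congr rfl fun y _ => ?_
    have := hs x; have := hs y
    field_simp
  rw [hEq] at hfin
  simp only [hK] at hfin
  have h5 : ∑ x, f x * ((lam - 1/2) * (dg G x * f x)
      - (∑ y, ad G x y * f y) / 2 + (1 - lam) * dg G x * (∑ y, dg G y * f y) / M)
      = (lam - 1/2) * ∑ x, dg G x * f x ^ 2 - (∑ x, f x * ∑ y, ad G x y * f y) / 2
        + (1 - lam) * (∑ x, dg G x * f x) ^ 2 / M := by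
    have h6 : (1 - lam) * (∑ x, dg G x * f x) ^ 2 / M
        = ∑ x, (dg G x * f x) * ((1 - lam) * (∑ x, dg G x * f x) / M) := by
      rw [← Finset.sum_mul]; ring
    rw [h6, Finset.mul_sum, Finset.sum_div, ← Finset.sum_sub_distrib, ← Finset.sum_add_distrib]
    exact Finset.sum_congr rfl fun x _ => by ring
  rw [h5] at hfin
  linarith

noncomputable def gq {V : Type*} [Fintype V] (G : SimpleGraph V) (S : Finset V) : ℕ → V → ℝ
  | 0, _ => 1
  | (k + 1), x => if x ∈ S then 0 else (∑ y, ad G x y * gq G S k y) / dg G x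

lemma gq_nonneg {V : Type*} [Fintype V] (G : SimpleGraph V) (S : Finset V) (k : ℕ) (x : V) :
    0 ≤ gq G S k x := by
  induction k generalizing x with
  | zero => simp [gq]
  | succ k ih =>
    simp only [gq]
    split_ifs
    · exact le_rfl
    · exact div_nonneg (Finset.sum_nonneg fun y _ => mul_nonneg (ad_nonneg _ _ _) (ih y))
        (Nat.cast_nonneg _)

lemma quad_off {V : Type*} [Fintype V] [DecidableEq V] (G : SimpleGraph V) (hG : G.Connected)
    (hd : ∀ x, 0 < dg G x) (S : Finset V) (f : V → ℝ) (hf : ∀ x ∈ S, f x = 0) :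
    |∑ x, f x * ∑ y, ad G x y * f y| ≤
      (1 - 2 * (1 - lambdaMax (lazyMatrix G)) * ((∑ x ∈ S, dg G x) / ∑ x, dg G x)) *
        ∑ x, dg G x * f x ^ 2 := by
  have h0 : |∑ x, f x * ∑ y, ad G x y * f y| ≤ ∑ x, |f x| * ∑ y, ad G x y * |f y| := by
    refine (Finset.abs_sum_le_sum_abs _ _).trans (Finset.sum_le_sum fun x _ => ?_)
    rw [abs_mul]
    refine mul_le_mul_of_nonneg_left ?_ (abs_nonneg _)
    refine (Finset.abs_sum_le_sum_abs _ _).trans (Finset.sum_le_sum fun y _ => ?_)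
    rw [abs_mul, abs_of_nonneg (ad_nonneg _ _ _)]
  refine h0.trans ?_
  have h1 := quad_bound G hG hd (fun x => |f x|)
  simp only [sq_abs] at h1
  have hlam := lam_lt_one G hd
  set lam := lambdaMax (lazyMatrix G)
  have : Nonempty V := hG.nonempty
  have hMpos : 0 < ∑ x, dg G x := Finset.sum_pos (fun x _ => hd x) Finset.univ_nonempty
  set M := ∑ x, dg G x with hM
  have hcs : (∑ x, dg G x * |f x|) ^ 2 ≤ (M - ∑ x ∈ S, dg G x) * ∑ x, dg G x * f x ^ 2 := by
    have e1 : M - ∑ x ∈ S, dg G x = ∑ x ∈ Finset.univ \ S, dg G x := by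
      rw [hM, ← Finset.sum_sdiff (Finset.subset_univ S)]; ring
    have e2 : ∑ x, dg G x * |f x| = ∑ x ∈ Finset.univ \ S, √(dg G x) * (√(dg G x) * |f x|) := by
      rw [← Finset.sum_sdiff (Finset.subset_univ S),
        Finset.sum_eq_zero (s := S) (fun x hx => by rw [hf x hx]; simp), add_zero]
      refine Finset.sum_congr rfl fun x _ => ?_
      rw [← mul_assoc, Real.mul_self_sqrt (hd x).le]
    rw [e1, e2]
    refine (Finset.sum_mul_sq_le_sq_mul_sq _ _ _).trans ?_
    have e3 : ∑ x ∈ Finset.univ \ S, √(dg G x) ^ 2 = ∑ x ∈ Finset.univ \ S, dg G x :=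
      Finset.sum_congr rfl fun x _ => Real.sq_sqrt (hd x).le
    rw [e3]
    refine mul_le_mul_of_nonneg_left ?_ (Finset.sum_nonneg fun x _ => (hd x).le)
    have e4 : ∑ x ∈ Finset.univ \ S, (√(dg G x) * |f x|) ^ 2
        = ∑ x ∈ Finset.univ \ S, dg G x * f x ^ 2 :=
      Finset.sum_congr rfl fun x _ => by rw [mul_pow, Real.sq_sqrt (hd x).le, sq_abs]
    rw [e4]
    exact Finset.sum_le_sum_of_subset_of_nonneg (Finset.subset_univ _)
      (fun x _ _ => mul_nonneg (hd x).le (sq_nonneg _))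
  have h2 : (1 - lam) * (∑ x, dg G x * |f x|) ^ 2 / M ≤
      (1 - lam) * ((1 - (∑ x ∈ S, dg G x) / M) * ∑ x, dg G x * f x ^ 2) := by
    rw [mul_div_assoc]
    refine mul_le_mul_of_nonneg_left ?_ (by linarith)
    rw [div_le_iff₀ hMpos]
    refine hcs.trans (le_of_eq ?_)
    field_simp
  nlinarith

lemma contr {V : Type*} [Fintype V] [DecidableEq V] (G : SimpleGraph V) (hG : G.Connected)
    (hd : ∀ x, 0 < dg G x) (S : Finset V) (c : ℝ) (hc : 0 < c)
    (hc' : 1 - 2 * (1 - lambdaMax (lazyMatrix G)) * ((∑ x ∈ S, dg G x) / ∑ x, dg G x) ≤ c)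
    (f : V → ℝ) (hf : ∀ x ∈ S, f x = 0) :
    ∑ x, dg G x * (if x ∈ S then 0 else (∑ y, ad G x y * f y) / dg G x) ^ 2 ≤
      c ^ 2 * ∑ x, dg G x * f x ^ 2 := by
  set g : V → ℝ := fun x => if x ∈ S then 0 else (∑ y, ad G x y * f y) / dg G x with hg
  have hq : ∀ k : V → ℝ, (∀ x ∈ S, k x = 0) →
      |∑ x, k x * ∑ y, ad G x y * k y| ≤ c * ∑ x, dg G x * k x ^ 2 := fun k hk =>
    (quad_off G hG hd S k hk).trans (mul_le_mul_of_nonneg_right hc'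
      (Finset.sum_nonneg fun x _ => mul_nonneg (hd x).le (sq_nonneg _)))
  have hgS : ∀ x ∈ S, g x = 0 := fun x hx => by simp [hg, hx]
  have hgn : ∑ x, dg G x * g x ^ 2 = ∑ x, g x * ∑ y, ad G x y * f y := by
    refine Finset.sum_congr rfl fun x _ => ?_
    have := hd x
    simp only [hg]
    split_ifs
    · simp
    · field_simp
  have hsym : ∑ x, f x * ∑ y, ad G x y * g y = ∑ x, g x * ∑ y, ad G x y * f y := by
    simp only [Finset.mul_sum]
    rw [Finset.sum_comm]
    refine Finset.sum_congr rfl fun x _ => Finset.sum_congr rfl fun y _ => ?_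
    rw [ad_symm]; ring
  have hexp : ∀ t : ℝ, ∑ x, (c * f x + t * g x) * ∑ y, ad G x y * (c * f y + t * g y)
      = c ^ 2 * ∑ x, f x * ∑ y, ad G x y * f y + 2 * c * t * ∑ x, g x * ∑ y, ad G x y * f y
        + t ^ 2 * ∑ x, g x * ∑ y, ad G x y * g y := by
    intro t
    have : ∀ x, ∑ y, ad G x y * (c * f y + t * g y)
        = c * ∑ y, ad G x y * f y + t * ∑ y, ad G x y * g y := by
      intro x
      rw [Finset.mul_sum, Finset.mul_sum, ← Finset.sum_add_distrib]
      exact Finset.sum_congr rfl fun y _ => by ring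
    simp only [this]
    have h2 : 2 * c * t * ∑ x, g x * ∑ y, ad G x y * f y =
       c * t * ∑ x, f x * ∑ y, ad G x y * g y + c * t * ∑ x, g x * ∑ y, ad G x y * f y := by
      rw [hsym]; ring
    rw [h2]
    simp only [Finset.mul_sum (s := Finset.univ) (a := c ^ 2), Finset.mul_sum (s := Finset.univ) (a := c * t),
      Finset.mul_sum (s := Finset.univ) (a := t ^ 2)]
    simp only [← Finset.sum_add_distrib]
    exact Finset.sum_congr rfl fun y _ => by ring
  have hnexp : ∀ t : ℝ, ∑ x, dg G x * (c * f x + t * g x) ^ 2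
      = c ^ 2 * ∑ x, dg G x * f x ^ 2 + 2 * c * t * ∑ x, dg G x * (f x * g x)
        + t ^ 2 * ∑ x, dg G x * g x ^ 2 := by
    intro t
    simp only [Finset.mul_sum, ← Finset.sum_add_distrib]
    exact Finset.sum_congr rfl fun y _ => by ring
  have a1 := (le_abs_self _).trans (hq (fun x => c * f x + 1 * g x) (fun x hx => by simp [hf x hx, hgS x hx]))
  have a2 := (neg_le_abs _).trans (hq (fun x => c * f x + (-1) * g x) (fun x hx => by simp [hf x hx, hgS x hx]))
  rw [hexp, hnexp] at a1 a2
  rw [← hgn] at a1 a2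
  have h4 : 4 * c * (∑ x, dg G x * g x ^ 2) ≤
      2 * c * (c ^ 2 * ∑ x, dg G x * f x ^ 2 + ∑ x, dg G x * g x ^ 2) := by nlinarith
  have h5 : 2 * c * (∑ x, dg G x * g x ^ 2) ≤ 2 * c * (c ^ 2 * ∑ x, dg G x * f x ^ 2) := by linarith
  exact le_of_mul_le_mul_left h5 (by positivity)

lemma gq_bound {V : Type*} [Fintype V] [DecidableEq V] (G : SimpleGraph V) (hG : G.Connected)
    (hd : ∀ x, 0 < dg G x) (S : Finset V) (c : ℝ) (hc : 0 < c)
    (hc' : 1 - 2 * (1 - lambdaMax (lazyMatrix G)) * ((∑ x ∈ S, dg G x) / ∑ x, dg G x) ≤ c)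
    (T : ℕ) (u : V) :
    dg G u * gq G S (T + 1) u ^ 2 ≤ (c ^ T) ^ 2 * ∑ x, dg G x := by
  have h : ∀ T, ∑ x, dg G x * gq G S (T + 1) x ^ 2 ≤ (c ^ T) ^ 2 * ∑ x, dg G x := by
    intro T
    induction T with
    | zero =>
      simp only [pow_zero, one_pow, one_mul]
      refine Finset.sum_le_sum fun x _ => ?_
      have hx := hd x
      simp only [gq]
      split_ifs
      · simpa using hx.le
      · simp only [mul_one, sum_ad]
        rw [div_self hx.ne']; simp
    | succ k ih =>
      have := contr G hG hd S c hc hc' (gq G S (k + 1)) (fun x hx => by simp [gq, hx])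
      have e : ∑ x, dg G x * gq G S (k + 1 + 1) x ^ 2 = ∑ x, dg G x *
        (if x ∈ S then 0 else (∑ y, ad G x y * gq G S (k+1) y) / dg G x) ^ 2 := by
        refine Finset.sum_congr rfl fun x _ => ?_
        rw [gq]
        congr
      rw [e]
      refine this.trans ?_
      calc _ ≤ c ^ 2 * ((c ^ k) ^ 2 * ∑ x, dg G x) := mul_le_mul_of_nonneg_left ih (by positivity)
        _ = _ := by ring
  refine le_trans ?_ (h T)
  exact Finset.single_le_sum (f := fun x => dg G x * gq G S (T + 1) x ^ 2)
    (fun x _ => mul_nonneg (hd x).le (sq_nonneg _)) (Finset.mem_univ u)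

/-- The current vertex (head of the history) has an untraversed incident edge. -/
def HasBlue {V : Type*} (G : SimpleGraph V) (y : V) (h : List V) : Prop :=
  ∃ z : V, G.Adj y z ∧ s(y, z) ∉ trav (y :: h)

/-- Vertices from which a random (red) step was made. -/
noncomputable def rdep {V : Type*} (G : SimpleGraph V) : List V → List V
  | [] => []
  | [_] => []
  | (_ :: y :: h) => if HasBlue G y h then rdep G (y :: h) else y :: rdep G (y :: h)

/-- Start vertex of the current blue phase. -/
noncomputable def pst {V : Type*} (G : SimpleGraph V) (u : V) : List V → V
  | [] => u
  | [x] => x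
  | (x :: y :: h) => if HasBlue G y h then pst G u (y :: h) else x

lemma trav_cons {V : Type*} (x y : V) (h : List V) :
    trav (x :: y :: h) = s(x, y) :: trav (y :: h) := by simp [trav]

lemma eStep_blue {V : Type*} [Fintype V] (G : SimpleGraph V) (A : List V → V) (y : V) (h : List V)
    (hb : HasBlue G y h) (x : V) : eStep G A (y :: h) x = if x = A (y :: h) then 1 else 0 := by
  unfold HasBlue at hb
  simp only [eStep, if_pos hb]

lemma eStep_red {V : Type*} [Fintype V] (G : SimpleGraph V) (A : List V → V) (y : V) (h : List V)
    (hb : ¬ HasBlue G y h) (x : V) : eStep G A (y :: h) x = ad G y x / dg G y := by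
  unfold HasBlue at hb
  simp only [eStep, if_neg hb, ad, dg]
  split_ifs <;> simp

lemma eStep_nonneg {V : Type*} [Fintype V] (G : SimpleGraph V) (A : List V → V) (y : V) (h : List V)
    (x : V) : 0 ≤ eStep G A (y :: h) x := by
  by_cases hb : HasBlue G y h
  · rw [eStep_blue G A y h hb]; split_ifs <;> norm_num
  · rw [eStep_red G A y h hb]; exact div_nonneg (ad_nonneg _ _ _) (Nat.cast_nonneg _)

lemma trajProb_nonneg {V : Type*} [Fintype V] (G : SimpleGraph V) (A : List V → V) (u : V) :
    ∀ h : List V, 0 ≤ trajProb G A u h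
  | [] => by simp [trajProb]
  | [x] => by simp only [trajProb]; split_ifs <;> norm_num
  | (x :: y :: h) => by
      simp only [trajProb]
      exact mul_nonneg (eStep_nonneg _ _ _ _ _) (trajProb_nonneg G A u (y :: h))

/-- An induction principle for histories of positive probability. -/
lemma hist_induction {V : Type*} [Fintype V] (G : SimpleGraph V) (A : List V → V)
    (hA : ValidRule G A) (u : V) (Q : List V → Prop)
    (h0 : Q [u])
    (hblue : ∀ x y h, trajProb G A u (y :: h) ≠ 0 → Q (y :: h) → HasBlue G y h → G.Adj y x →
      s(y, x) ∉ trav (y :: h) → Q (x :: y :: h))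
    (hred : ∀ x y h, trajProb G A u (y :: h) ≠ 0 → Q (y :: h) → ¬ HasBlue G y h → G.Adj y x →
      Q (x :: y :: h)) :
    ∀ h, trajProb G A u h ≠ 0 → Q h
  | [], hh => by simp [trajProb] at hh
  | [x], hh => by
      simp only [trajProb, ne_eq, ite_eq_right_iff, one_ne_zero, imp_false, not_not] at hh
      rw [hh]; exact h0
  | (x :: y :: h), hh => by
      simp only [trajProb] at hh
      have h1 := left_ne_zero_of_mul hh
      have h2 := right_ne_zero_of_mul hh
      have ih := hist_induction G A hA u Q h0 hblue hred (y :: h) h2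
      by_cases hb : HasBlue G y h
      · rw [eStep_blue G A y h hb] at h1
        have hx : x = A (y :: h) := by by_contra hx; simp [hx] at h1
        have := hA y h hb
        rw [← hx] at this
        exact hblue x y h h2 ih hb this.1 this.2
      · rw [eStep_red G A y h hb] at h1
        have : G.Adj y x := by by_contra hx; simp [ad, hx] at h1
        exact hred x y h h2 ih hb this

lemma trav_edge {V : Type*} [Fintype V] (G : SimpleGraph V) (A : List V → V)
    (hA : ValidRule G A) (u : V) (h : List V) (hh : trajProb G A u h ≠ 0) :
    ∀ e ∈ trav h, e ∈ G.edgeSet := by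
  refine hist_induction G A hA u (fun h => ∀ e ∈ trav h, e ∈ G.edgeSet) ?_ ?_ ?_ h hh
  · simp [trav]
  · intro x y h _ ih _ hadj _ e he
    rw [trav_cons, List.mem_cons] at he
    rcases he with rfl | he
    · exact hadj.symm
    · exact ih e he
  · intro x y h _ ih _ hadj e he
    rw [trav_cons, List.mem_cons] at he
    rcases he with rfl | he
    · exact hadj.symm
    · exact ih e he

lemma red_mem {V : Type*} {G : SimpleGraph V} {y x : V} {h : List V} (hb : ¬ HasBlue G y h)
    (hadj : G.Adj y x) : s(x, y) ∈ trav (y :: h) := by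
  by_contra hn
  exact hb ⟨x, hadj, by rwa [Sym2.eq_swap]⟩

lemma count_len {V : Type*} [Fintype V] (G : SimpleGraph V) (A : List V → V)
    (hA : ValidRule G A) (u : V) (h : List V) (hh : trajProb G A u h ≠ 0) :
    h.length = 1 + (rdep G h).length + (trav h).toFinset.card := by
  refine hist_induction G A hA u
    (fun h => h.length = 1 + (rdep G h).length + (trav h).toFinset.card) ?_ ?_ ?_ h hh
  · simp [rdep, trav]
  · intro x y h _ ih hb hadj hn
    rw [trav_cons, rdep, if_pos hb, List.toFinset_cons, Finset.card_insert_of_notMem, List.length_cons, ih]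
    · ring
    · rw [List.mem_toFinset, Sym2.eq_swap]; exact hn
  · intro x y h _ ih hb hadj
    rw [trav_cons, rdep, if_neg hb, List.toFinset_cons, Finset.insert_eq_of_mem, List.length_cons, ih,
      List.length_cons]
    · ring
    · rw [List.mem_toFinset]; exact red_mem hb hadj

lemma parity {V : Type*} [Fintype V] (G : SimpleGraph V) (hev : ∀ x, Even ((G.neighborSet x).ncard))
    (A : List V → V) (hA : ValidRule G A) (u : V) (h : List V) (hh : trajProb G A u h ≠ 0) :
    ∀ z, (∑ w, if s(z, w) ∈ trav h then (1 : ZMod 2) else 0) =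
      (if z = h.headD u then 1 else 0) + (if z = pst G u h then 1 else 0) := by
  refine hist_induction G A hA u (fun h => ∀ z, (∑ w, if s(z, w) ∈ trav h then (1 : ZMod 2) else 0) =
      (if z = h.headD u then 1 else 0) + (if z = pst G u h then 1 else 0)) ?_ ?_ ?_ h hh
  · intro z
    simp only [trav, pst, List.headD]
    have : ∀ a : ZMod 2, 0 = a + a := by decide
    refine Eq.trans ?_ (this _)
    simp
  · intro x y h _ ih hb hadj hn z
    have ihz := ih z
    simp only [List.headD] at ihz ⊢
    rw [pst, if_pos hb, trav_cons]
    have hne : y ≠ x := hadj.ne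
    have e1 : ∀ w, (if s(z, w) ∈ s(x, y) :: trav (y :: h) then (1 : ZMod 2) else 0)
        = (if s(z, w) ∈ trav (y :: h) then 1 else 0)
          + ((if z = x ∧ w = y then 1 else 0) + (if z = y ∧ w = x then 1 else 0)) := by
      intro w
      simp only [List.mem_cons]
      by_cases h1 : s(z, w) = s(x, y)
      · have h2 : s(z, w) ∉ trav (y :: h) := by rw [h1, Sym2.eq_swap]; exact hn
        rw [if_pos (Or.inl h1), if_neg h2]
        rw [Sym2.eq_iff] at h1
        rcases h1 with ⟨rfl, rfl⟩ | ⟨rfl, rfl⟩ <;> simp [hne, hne.symm]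
      · have h3 := h1
        rw [Sym2.eq_iff] at h3
        push Not at h3
        simp only [h1, false_or]
        rw [if_neg (c := z = x ∧ w = y) (fun hc => h3.1 hc.1 hc.2),
          if_neg (c := z = y ∧ w = x) (fun hc => h3.2 hc.1 hc.2)]
        simp
    simp only [e1, Finset.sum_add_distrib, ihz, ite_and]
    have e2 : ∀ a b : V, (∑ w, if z = a then (if w = b then (1 : ZMod 2) else 0) else 0)
        = if z = a then 1 else 0 := by
      intro a b; split_ifs <;> simp
    rw [e2, e2]
    have : ∀ a b c : ZMod 2, a + b + (c + a) = c + b := by decide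
    exact this _ _ _
  · intro x y h hp ih hb hadj z
    have ihz := ih z
    have ihy := ih y
    simp only [List.headD] at ihz ihy ⊢
    rw [pst, if_neg hb, trav_cons]
    have e1 : ∀ w, (s(z, w) ∈ s(x, y) :: trav (y :: h)) ↔ s(z, w) ∈ trav (y :: h) := by
      intro w
      rw [List.mem_cons]
      refine ⟨?_, Or.inr⟩
      rintro (h1 | h1)
      · rw [h1]; exact red_mem hb hadj
      · exact h1
    simp only [e1]
    have hpy : y = pst G u (y :: h) := by
      by_contra hne
      rw [if_pos trivial, if_neg hne, Finset.sum_boole] at ihy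
      have : (Finset.univ.filter fun w => s(y, w) ∈ trav (y :: h)).card = (G.neighborSet y).ncard := by
        rw [Set.ncard_eq_toFinset_card']
        congr 1
        ext w
        simp only [Finset.mem_filter, Finset.mem_univ, true_and, Set.mem_toFinset,
          SimpleGraph.mem_neighborSet]
        constructor
        · intro hm; exact trav_edge G A hA u _ hp _ hm
        · intro hm; rw [Sym2.eq_swap]; exact red_mem hb hm
      rw [this, (ZMod.natCast_eq_zero_iff_even).mpr (hev y)] at ihy
      simp at ihy
    rw [ihz, ← hpy]
    have : ∀ a b : ZMod 2, a + a = b + b := by decide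
    exact this _ _

lemma red_pst {V : Type*} [Fintype V] (G : SimpleGraph V) (hev : ∀ x, Even ((G.neighborSet x).ncard))
    (A : List V → V) (hA : ValidRule G A) (u : V) (y : V) (h : List V)
    (hp : trajProb G A u (y :: h) ≠ 0) (hb : ¬ HasBlue G y h) : pst G u (y :: h) = y := by
  have ihy := parity G hev A hA u _ hp y
  by_contra hne
  simp only [List.headD] at ihy
  rw [if_pos trivial, if_neg (Ne.symm hne), Finset.sum_boole] at ihy
  have : (Finset.univ.filter fun w => s(y, w) ∈ trav (y :: h)).card = (G.neighborSet y).ncard := by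
    rw [Set.ncard_eq_toFinset_card']
    congr 1
    ext w
    simp only [Finset.mem_filter, Finset.mem_univ, true_and, Set.mem_toFinset,
      SimpleGraph.mem_neighborSet]
    constructor
    · intro hm; exact trav_edge G A hA u _ hp _ hm
    · intro hm; rw [Sym2.eq_swap]; exact red_mem hb hm
  rw [this, (ZMod.natCast_eq_zero_iff_even).mpr (hev y)] at ihy
  simp at ihy

lemma hsum_succ {V : Type*} [Fintype V] (t : ℕ) (F : List V → ℝ) :
    ∑ f : Fin (t + 1 + 1) → V, F (List.ofFn f) =
      ∑ f : Fin (t + 1) → V, ∑ x, F (x :: List.ofFn f) := by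
  rw [← (Fin.consEquiv (fun _ : Fin (t + 1 + 1) => V)).sum_comp, Fintype.sum_prod_type_right]
  refine Finset.sum_congr rfl fun f _ => Finset.sum_congr rfl fun x _ => ?_
  simp [Fin.consEquiv, List.ofFn_succ]

noncomputable def Psi {V : Type*} [Fintype V] (G : SimpleGraph V) (A : List V → V) (u : V)
    (S : Finset V) (T : ℕ) (h : List V) : ℝ :=
  trajProb G A u h * ((if ∀ x ∈ rdep G h, x ∉ S then 1 else 0) *
    gq G S (T - (rdep G h).length) (pst G u h))

lemma Psi_nonneg {V : Type*} [Fintype V] (G : SimpleGraph V) (A : List V → V) (u : V)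
    (S : Finset V) (T : ℕ) (h : List V) : 0 ≤ Psi G A u S T h := by
  refine mul_nonneg (trajProb_nonneg _ _ _ _) (mul_nonneg ?_ (gq_nonneg _ _ _ _))
  split_ifs <;> norm_num

lemma Psi_step {V : Type*} [Fintype V] (G : SimpleGraph V)
    (hev : ∀ x, Even ((G.neighborSet x).ncard)) (hd : ∀ x, 0 < dg G x)
    (A : List V → V) (hA : ValidRule G A) (u : V) (S : Finset V) (T : ℕ) (y : V) (h : List V) :
    ∑ x, Psi G A u S T (x :: y :: h) ≤ Psi G A u S T (y :: h) := by
  by_cases hp : trajProb G A u (y :: h) = 0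
  · simp [Psi, trajProb, hp]
  by_cases hb : HasBlue G y h
  · simp only [Psi, trajProb, rdep, pst, if_pos hb, eStep_blue G A y h hb]
    rw [← Finset.sum_mul]
    simp
  · simp only [Psi, trajProb, rdep, pst, if_neg hb, eStep_red G A y h hb]
    rw [red_pst G hev A hA u y h hp hb]
    have hy := hd y
    have e : ∀ x, ad G y x / dg G y * trajProb G A u (y :: h) *
        ((if ∀ z ∈ y :: rdep G (y :: h), z ∉ S then 1 else 0) *
          gq G S (T - (y :: rdep G (y :: h)).length) x) =
        trajProb G A u (y :: h) * ((if ∀ z ∈ y :: rdep G (y :: h), z ∉ S then 1 else 0) *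
          ((ad G y x * gq G S (T - (y :: rdep G (y :: h)).length) x) / dg G y)) := by
      intro x; ring
    simp only [e]
    rw [← Finset.mul_sum, ← Finset.mul_sum, ← Finset.sum_div]
    refine mul_le_mul_of_nonneg_left ?_ (trajProb_nonneg _ _ _ _)
    by_cases hS : ∀ z ∈ rdep G (y :: h), z ∉ S
    · rw [if_pos hS]
      by_cases hyS : y ∈ S
      · rw [if_neg (by simp [hyS]), zero_mul]
        exact mul_nonneg (by norm_num) (gq_nonneg _ _ _ _)
      · rw [if_pos (by simpa [hyS] using hS), one_mul, one_mul, List.length_cons]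
        by_cases hT : T ≤ (rdep G (y :: h)).length
        · rw [Nat.sub_eq_zero_of_le hT, Nat.sub_eq_zero_of_le (by omega)]
          simp only [gq, mul_one, sum_ad]
          rw [div_self hy.ne']
        · obtain ⟨k, hk⟩ : ∃ k, T - (rdep G (y :: h)).length = k + 1 := ⟨_, (Nat.succ_pred_eq_of_pos (by omega)).symm⟩
          have hk' : T - ((rdep G (y :: h)).length + 1) = k := by omega
          rw [hk, hk', gq, if_neg hyS]
    · rw [if_neg hS, if_neg (fun hc => hS fun z hz => hc z (List.mem_cons_of_mem _ hz))]
      simp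

lemma Psi_sum {V : Type*} [Fintype V] (G : SimpleGraph V)
    (hev : ∀ x, Even ((G.neighborSet x).ncard)) (hd : ∀ x, 0 < dg G x)
    (A : List V → V) (hA : ValidRule G A) (u : V) (S : Finset V) (T : ℕ) (t : ℕ) :
    ∑ f : Fin (t + 1) → V, Psi G A u S T (List.ofFn f) ≤ gq G S T u := by
  induction t with
  | zero =>
    rw [← (Fin.consEquiv (fun _ : Fin (0 + 1) => V)).sum_comp, Fintype.sum_prod_type_right]
    simp [Fin.consEquiv, List.ofFn_succ, Psi, trajProb, rdep, pst]
  | succ t ih =>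
    rw [hsum_succ]
    refine le_trans (Finset.sum_le_sum fun f _ => ?_) ih
    rw [List.ofFn_succ]
    exact Psi_step G hev hd A hA u S T _ _

noncomputable def chains {V : Type*} [Fintype V] (G : SimpleGraph V) : ℕ → Finset (List V)
  | 0 => Finset.univ.image fun x => [x]
  | (k + 1) => (chains G k).biUnion fun L =>
      (Finset.univ.filter fun x => ∃ y t, L = y :: t ∧ G.Adj y x).image fun x => x :: L

lemma chains_card {V : Type*} [Fintype V] (G : SimpleGraph V) (D : ℕ)
    (hD : ∀ x, (G.neighborSet x).ncard ≤ D) (k : ℕ) :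
    (chains G k).card ≤ Fintype.card V * D ^ k := by
  induction k with
  | zero =>
    rw [chains, pow_zero, mul_one]
    exact Finset.card_image_le
  | succ k ih =>
    rw [chains]
    refine (Finset.card_biUnion_le_card_mul _ _ D ?_).trans ?_
    · intro L _
      refine Finset.card_image_le.trans ?_
      cases L with
      | nil => simp
      | cons y t =>
        refine le_trans (le_of_eq ?_) (hD y)
        rw [Set.ncard_eq_toFinset_card']
        congr 1
        ext w
        simp
    · calc _ ≤ Fintype.card V * D ^ k * D := Nat.mul_le_mul_right _ ih
        _ = _ := by ring

lemma mem_chains {V : Type*} [Fintype V] (G : SimpleGraph V) (L : List V) :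
    ∀ k, L.length = k + 1 → L.IsChain G.Adj → L ∈ chains G k := by
  induction L with
  | nil => intro k h; simp at h
  | cons x L ih =>
    intro k hk hc
    cases L with
    | nil =>
      have : k = 0 := by simpa using hk.symm
      subst this; simp [chains]
    | cons y t =>
      obtain ⟨j, rfl⟩ : ∃ j, k = j + 1 := ⟨t.length, by simpa using hk.symm⟩
      rw [List.isChain_cons_cons] at hc
      have := ih j (by simpa using hk) hc.2
      simp only [chains, Finset.mem_biUnion, Finset.mem_image, Finset.mem_filter, Finset.mem_univ,
        true_and]
      exact ⟨y :: t, this, x, ⟨y, t, rfl, hc.1.symm⟩, rfl⟩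

lemma grow {V : Type*} [Fintype V] (G B : SimpleGraph V) (hBG : B ≤ G) (v : V) (k : ℕ)
    (hk : k + 1 ≤ {x | B.Reachable v x}.ncard) :
    ∃ L : List V, L.length = 2 * k + 1 ∧ L.IsChain G.Adj ∧ v ∈ L ∧ (∀ x ∈ L, B.Reachable v x) ∧
      L.toFinset.card = k + 1 := by
  induction k with
  | zero => exact ⟨[v], by simp⟩
  | succ k ih =>
    obtain ⟨L, hlen, hch, hv, hR, hcard⟩ := ih (by omega)
    obtain ⟨x, hx, w, hw, hxw⟩ : ∃ x ∈ L, ∃ w, w ∉ L ∧ B.Adj x w := by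
      by_contra hcon
      push Not at hcon
      have hcl : ∀ a b : V, B.Reachable a b → a ∈ L → b ∈ L := by
        rintro a b ⟨p⟩
        induction p with
        | nil => exact id
        | cons hab _ ih =>
          intro ha
          refine ih ?_
          by_contra hn
          exact hcon _ ha _ hn hab
      have : {x | B.Reachable v x} ⊆ (L.toFinset : Set V) := by
        intro b hb
        simpa using hcl v b hb hv
      have := Set.ncard_le_ncard this
      rw [Set.ncard_coe_finset, hcard] at this
      omega
    obtain ⟨L1, L2, rfl⟩ := List.append_of_mem hx
    refine ⟨L1 ++ x :: w :: x :: L2, ?_, ?_, ?_, ?_, ?_⟩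
    · simp at hlen ⊢; omega
    · rw [List.isChain_split] at hch ⊢
      refine ⟨hch.1, ?_⟩
      rw [List.isChain_cons_cons, List.isChain_cons_cons]
      exact ⟨hBG hxw, (hBG hxw).symm, hch.2⟩
    · simp at hv ⊢; tauto
    · intro z hz
      have : z ∈ L1 ++ x :: L2 ∨ z = w := by simp at hz ⊢; tauto
      rcases this with h | rfl
      · exact hR z h
      · exact (hR x hx).trans hxw.reachable
    · have : (L1 ++ x :: w :: x :: L2).toFinset = insert w (L1 ++ x :: L2).toFinset := by
        ext z
        simp only [List.mem_toFinset, Finset.mem_insert, List.mem_append, List.mem_cons]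
        tauto
      rw [this, Finset.card_insert_of_notMem (by rwa [List.mem_toFinset]), hcard]

lemma trav_mem {V : Type*} (v w : V) : ∀ h : List V, s(v, w) ∈ trav h → v ∈ h
  | [], hh => by simp [trav] at hh
  | [x], hh => by simp [trav] at hh
  | (x :: y :: h), hh => by
      rw [trav_cons, List.mem_cons, Sym2.eq_iff] at hh
      rcases hh with (⟨rfl, rfl⟩ | ⟨rfl, rfl⟩) | hh
      · simp
      · simp
      · exact List.mem_cons_of_mem _ (trav_mem v w (y :: h) hh)

lemma rdep_full {V : Type*} (G : SimpleGraph V) : ∀ (h : List V), ∀ x ∈ rdep G h, ∀ y, G.Adj x y →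
    s(x, y) ∈ trav h
  | [], x, hx => by simp [rdep] at hx
  | [_], x, hx => by simp [rdep] at hx
  | (a :: b :: h), x, hx => by
      intro y hy
      rw [trav_cons]
      refine List.mem_cons_of_mem _ ?_
      rw [rdep] at hx
      split_ifs at hx with hb
      · exact rdep_full G (b :: h) x hx y hy
      · rw [List.mem_cons] at hx
        rcases hx with rfl | hx
        · rw [Sym2.eq_swap]; exact red_mem hb hy
        · exact rdep_full G (b :: h) x hx y hy

lemma build {V : Type*} [Fintype V] (G : SimpleGraph V)
    (hev : ∀ x, Even ((G.neighborSet x).ncard)) (hd : ∀ x, 0 < dg G x)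
    (A : List V → V) (hA : ValidRule G A) (u : V) (ℓ k : ℕ) (hk : k + 1 ≤ ℓ)
    (hgood : EvenSubgraphGood G ℓ) (v : V) (h : List V) (hp : trajProb G A u h ≠ 0)
    (hv : v ∉ h) (hph : pst G u h = h.headD u) :
    ∃ L ∈ chains G (2 * k), L.toFinset.card = k + 1 ∧ ∀ x ∈ rdep G h, x ∉ L.toFinset := by
  let B : SimpleGraph V :=
    { Adj := fun x y => G.Adj x y ∧ s(x, y) ∉ trav h
      symm := ⟨fun x y hxy => ⟨hxy.1.symm, by rw [Sym2.eq_swap]; exact hxy.2⟩⟩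
      loopless := ⟨fun x hx => G.loopless.irrefl x hx.1⟩ }
  have hBG : B ≤ G := fun x y hxy => hxy.1
  have hvB : ∀ w, G.Adj v w → B.Adj v w := fun w hw => ⟨hw, fun hm => hv (trav_mem v w h hm)⟩
  let H : G.Subgraph :=
    { verts := {x | B.Reachable v x}
      Adj := fun x y => B.Adj x y ∧ B.Reachable v x
      adj_sub := fun hxy => hxy.1.1
      edge_vert := fun hxy => hxy.2
      symm := ⟨fun x y hxy => ⟨hxy.1.symm, hxy.2.trans hxy.1.reachable⟩⟩ }
  have hHgood := hgood v H ⟨v, SimpleGraph.Reachable.refl v⟩ (by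
    intro e he hve
    obtain ⟨w, rfl⟩ := Sym2.mem_iff_exists.mp hve
    exact ⟨hvB w he, SimpleGraph.Reachable.refl v⟩) (by
    intro x
    by_cases hx : B.Reachable v x
    · have e1 : (H.neighborSet x) = {y | B.Adj x y} := by
        ext y
        exact ⟨fun hh => hh.1, fun hh => ⟨hh, hx⟩⟩
      rw [e1]
      have hpar := parity G hev A hA u h hp x
      rw [hph, Finset.sum_boole] at hpar
      have h2 : ∀ a : ZMod 2, a + a = 0 := by decide
      rw [h2, ZMod.natCast_eq_zero_iff_even] at hpar
      have hpart : (G.neighborSet x).ncard = {y | B.Adj x y}.ncard +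
          (Finset.univ.filter fun w => s(x, w) ∈ trav h).card := by
        rw [← Set.ncard_coe_finset, ← Set.ncard_union_eq]
        · congr 1
          ext y
          simp only [SimpleGraph.mem_neighborSet, Finset.coe_filter, Finset.mem_univ, true_and,
            Set.mem_union, Set.mem_ofPred_eq, B]
          constructor
          · intro hy
            by_cases hm : s(x, y) ∈ trav h
            · exact Or.inr hm
            · exact Or.inl ⟨hy, hm⟩
          · rintro (hy | hy)
            · exact hy.1
            · exact trav_edge G A hA u h hp _ hy
        · rw [Set.disjoint_left]
          intro y hy hy'
          simp only [Finset.coe_filter, Finset.mem_univ, true_and, Set.mem_ofPred_eq] at hy'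
          exact hy.2 hy'
      have := hev x
      rw [hpart, Nat.even_add] at this
      exact this.mpr hpar
    · have e1 : (H.neighborSet x) = ∅ := by
        ext y
        simp only [Set.mem_empty_iff_false, iff_false]
        exact fun hh => hx hh.2
      rw [e1]; simp)
  obtain ⟨L, hlen, hch, hvL, hR, hcard⟩ := grow G B hBG v k (hk.trans hHgood)
  refine ⟨L, mem_chains G L _ hlen hch, hcard, ?_⟩
  intro x hx hxL
  have hreach := hR x (by simpa using hxL)
  -- `x` has a blue neighbour
  have hblue : ∃ w, B.Adj x w := by
    by_cases hxv : x = v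
    · subst hxv
      have := hd x
      unfold dg at this
      have h3 : 0 < (G.neighborSet x).ncard := by exact_mod_cast this
      obtain ⟨w, hw⟩ := (Set.ncard_pos).mp h3
      exact ⟨w, hvB w hw⟩
    · obtain ⟨p⟩ := hreach.symm
      cases p with
      | nil => exact absurd rfl hxv
      | cons hab _ => exact ⟨_, hab⟩
  obtain ⟨w, hw⟩ := hblue
  exact hw.2 (rdep_full G h x hx w hw.1)

lemma exists_chain {V : Type*} [Fintype V] (G : SimpleGraph V)
    (hev : ∀ x, Even ((G.neighborSet x).ncard)) (hd : ∀ x, 0 < dg G x)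
    (A : List V → V) (hA : ValidRule G A) (u : V) (ℓ k : ℕ) (hk : k + 1 ≤ ℓ)
    (hgood : EvenSubgraphGood G ℓ) (v : V) (h : List V) (hp : trajProb G A u h ≠ 0)
    (hv : v ∉ h) :
    ∃ L ∈ chains G (2 * k), L.toFinset.card = k + 1 ∧ ∀ x ∈ rdep G h, x ∉ L.toFinset := by
  refine hist_induction G A hA u (fun h => trajProb G A u h ≠ 0 → v ∉ h →
    ∃ L ∈ chains G (2 * k), L.toFinset.card = k + 1 ∧ ∀ x ∈ rdep G h, x ∉ L.toFinset)
    ?_ ?_ ?_ h hp hp hv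
  · intro hp hv
    exact build G hev hd A hA u ℓ k hk hgood v _ hp hv (by simp [pst])
  · intro x y h hp' ih hb _ _ _ hv
    rw [rdep, if_pos hb]
    exact ih hp' (fun hm => hv (List.mem_cons_of_mem _ hm))
  · intro x y h _ ih hb _ hp hv
    exact build G hev hd A hA u ℓ k hk hgood v _ hp hv (by simp [pst, hb])

lemma uncov_bound {V : Type*} [Fintype V] (G : SimpleGraph V)
    (hev : ∀ x, Even ((G.neighborSet x).ncard)) (hd : ∀ x, 0 < dg G x)
    (A : List V → V) (hA : ValidRule G A) (u : V) (ℓ k : ℕ) (hk : k + 1 ≤ ℓ)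
    (hgood : EvenSubgraphGood G ℓ) (D : ℕ) (hD : ∀ x, (G.neighborSet x).ncard ≤ D)
    (T t : ℕ) (hT : T + G.edgeSet.ncard ≤ t) (β : ℝ) (hβ0 : 0 ≤ β)
    (hβ : ∀ S : Finset V, S.card = k + 1 → gq G S T u ≤ β) :
    uncovProb G A u t ≤ (Fintype.card V * D ^ (2 * k) : ℕ) * β := by
  unfold uncovProb
  set C := (chains G (2 * k)).filter fun L => L.toFinset.card = k + 1 with hC
  calc _ ≤ ∑ f : Fin (t + 1) → V, ∑ L ∈ C, Psi G A u L.toFinset T (List.ofFn f) := by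
        refine Finset.sum_le_sum fun f _ => ?_
        have hnn : 0 ≤ ∑ L ∈ C, Psi G A u L.toFinset T (List.ofFn f) :=
          Finset.sum_nonneg fun L _ => Psi_nonneg _ _ _ _ _ _
        split_ifs with hcov
        · exact hnn
        · by_cases hp : trajProb G A u (List.ofFn f) = 0
          · rw [hp]; exact hnn
          push Not at hcov
          obtain ⟨v, hv⟩ := hcov
          obtain ⟨L, hL, hcard, hdis⟩ := exists_chain G hev hd A hA u ℓ k hk hgood v (List.ofFn f) hp
            (by rw [List.mem_ofFn']; rintro ⟨i, hi⟩; exact hv i hi)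
          refine le_trans (le_of_eq ?_) (Finset.single_le_sum
            (f := fun L : List V => Psi G A u L.toFinset T (List.ofFn f))
            (fun L _ => Psi_nonneg _ _ _ _ _ _) (Finset.mem_filter.mpr ⟨hL, hcard⟩))
          have hlen := count_len G A hA u _ hp
          have hm : (trav (List.ofFn f)).toFinset.card ≤ G.edgeSet.ncard := by
            rw [← Set.ncard_coe_finset]
            refine Set.ncard_le_ncard ?_
            intro e he
            exact trav_edge G A hA u _ hp e (by simpa using he)
          rw [List.length_ofFn] at hlen
          simp only [Psi]
          rw [if_pos hdis, Nat.sub_eq_zero_of_le (by omega)]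
          simp [gq]
    _ = ∑ L ∈ C, ∑ f : Fin (t + 1) → V, Psi G A u L.toFinset T (List.ofFn f) := Finset.sum_comm
    _ ≤ ∑ L ∈ C, β := Finset.sum_le_sum fun L hL =>
        (Psi_sum G hev hd A hA u _ T t).trans (hβ _ (Finset.mem_filter.mp hL).2)
    _ = (C.card : ℝ) * β := by simp
    _ ≤ _ := by
        refine mul_le_mul_of_nonneg_right ?_ hβ0
        exact_mod_cast (Finset.card_filter_le _ _).trans (chains_card G D hD _)

lemma ncard_nbr {V : Type*} [Fintype V] (G : SimpleGraph V) [DecidableRel G.Adj] (x : V) :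
    (G.neighborSet x).ncard = G.degree x := by
  rw [Set.ncard_eq_toFinset_card', ← SimpleGraph.card_neighborFinset_eq_degree]
  congr 1

lemma main_bound (V : Type) [Fintype V] [DecidableEq V] [Nontrivial V] (G : SimpleGraph V)
    [DecidableRel G.Adj] (ℓ : ℕ) (hG : G.Connected) (hev : ∀ x : V, Even (G.degree x)) (hℓ : 0 < ℓ)
    (hgood : EvenSubgraphGood G ℓ) (A : List V → V) (hA : ValidRule G A) (u : V) :
    uncovProb G A u
      ⌈10 * (G.edgeFinset.card : ℝ) *
        (1 + (G.maxDegree : ℝ) * Real.log (Fintype.card V) /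
          ((G.minDegree : ℝ) * min (ℓ : ℝ) (Real.log (Fintype.card V)) *
            (1 - lambdaMax (lazyMatrix G))))⌉₊ ≤
      1 / (Fintype.card V : ℝ) ^ 3 := by
  have hpos : ∀ x, 0 < G.degree x := fun x => hG.preconnected.degree_pos_of_nontrivial x
  have htwo : ∀ x, 2 ≤ G.degree x := by
    intro x
    have h1 := hpos x
    obtain ⟨r, hr⟩ := hev x
    omega
  have hdg : ∀ x, dg G x = (G.degree x : ℝ) := fun x => by rw [dg, ncard_nbr]
  have hd : ∀ x, 0 < dg G x := fun x => by rw [hdg]; exact_mod_cast hpos x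
  have hn3 : 3 ≤ Fintype.card V := by
    have := G.degree_lt_card_verts u
    have := htwo u
    omega
  have hδ : 2 ≤ G.minDegree := by
    obtain ⟨x, hx⟩ := G.exists_minimal_degree_vertex
    rw [hx]; exact htwo x
  have hΔ : 2 ≤ G.maxDegree := (htwo u).trans (G.degree_le_maxDegree u)
  have hlam := lam_lt_one G hd
  have hsum : ∑ x, dg G x = 2 * (G.edgeFinset.card : ℝ) := by
    simp only [hdg]
    exact_mod_cast G.sum_degrees_eq_twice_card_edges
  have hmn : 2 * (G.edgeFinset.card : ℝ) ≤ (Fintype.card V : ℝ) ^ 2 := by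
    rw [← hsum]
    calc ∑ x, dg G x ≤ ∑ x : V, (Fintype.card V : ℝ) := Finset.sum_le_sum fun x _ => by
          rw [hdg]; exact_mod_cast (G.degree_lt_card_verts x).le
      _ = _ := by simp [sq]
  have hm1 : 1 ≤ G.edgeFinset.card := by
    have h1 : 0 < ∑ x, dg G x := Finset.sum_pos (fun x _ => hd x) Finset.univ_nonempty
    rw [hsum] at h1
    have : (0 : ℝ) < G.edgeFinset.card := by linarith
    exact_mod_cast this
  have hmE : G.edgeSet.ncard = G.edgeFinset.card := by
    rw [← SimpleGraph.coe_edgeFinset, Set.ncard_coe_finset]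
  set n : ℕ := Fintype.card V with hn
  have hn3' : (3 : ℝ) ≤ n := by exact_mod_cast hn3
  have hlog : 1 ≤ Real.log n := by
    rw [Real.le_log_iff_exp_le (by linarith)]
    exact Real.exp_one_lt_three.le.trans hn3'
  set lg := Real.log n with hlg
  set γ := 1 - lambdaMax (lazyMatrix G) with hγ
  have hγ0 : 0 < γ := by rw [hγ]; linarith
  set m := G.edgeFinset.card with hm
  set Δ := G.maxDegree with hΔd
  set δ := G.minDegree with hδd
  set w := min (ℓ : ℝ) lg with hw
  have hℓ1 : (1 : ℝ) ≤ ℓ := by exact_mod_cast hℓ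
  have hw1 : 1 ≤ w := le_min hℓ1 hlog
  have hfl : 1 ≤ ⌊lg⌋₊ := Nat.le_floor (by simpa using hlog)
  obtain ⟨k, hk⟩ : ∃ k, min ℓ ⌊lg⌋₊ = k + 1 := ⟨_, (Nat.succ_pred_eq_of_pos (by omega)).symm⟩
  have hkℓ : k + 1 ≤ ℓ := by omega
  have hklg : ((k + 1 : ℕ) : ℝ) ≤ lg :=
    le_trans (by exact_mod_cast (by omega : k + 1 ≤ ⌊lg⌋₊)) (Nat.floor_le (by linarith))
  have hkw : w ≤ 2 * ((k + 1 : ℕ) : ℝ) := by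
    rw [← hk]
    rcases le_total ℓ ⌊lg⌋₊ with h | h
    · rw [min_eq_left h]
      have := min_le_left (ℓ : ℝ) lg
      linarith
    · rw [min_eq_right h]
      have h1 := min_le_right (ℓ : ℝ) lg
      have h2 := Nat.lt_floor_add_one lg
      have h3 : (1 : ℝ) ≤ (⌊lg⌋₊ : ℝ) := by exact_mod_cast hfl
      linarith
  have hδ' : (2 : ℝ) ≤ δ := by exact_mod_cast hδ
  have hΔ' : (2 : ℝ) ≤ Δ := by exact_mod_cast hΔ
  have hm' : (1 : ℝ) ≤ m := by exact_mod_cast hm1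
  set R := (Δ : ℝ) * lg / (δ * w * γ) with hR
  have hR0 : 0 ≤ R := by positivity
  set t := ⌈10 * (m : ℝ) * (1 + R)⌉₊ with ht
  have htge : 10 * (m : ℝ) * (1 + R) ≤ t := Nat.le_ceil _
  have htm : m + 1 ≤ t := by
    have : ((m + 1 : ℕ) : ℝ) ≤ t := by push_cast; nlinarith
    exact_mod_cast this
  obtain ⟨T, hT⟩ : ∃ T, t = T + 1 + m := ⟨t - m - 1, by omega⟩
  have hTge : 10 * m * R ≤ (T : ℝ) := by
    have : (t : ℝ) = T + 1 + m := by exact_mod_cast hT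
    nlinarith
  have hmR : γ * ((k + 1 : ℕ) : ℝ) * δ / m * T ≥ 5 * Δ * lg := by
    have h1 : γ * ((k + 1 : ℕ) : ℝ) * δ / m * (10 * m * R) ≤ γ * ((k + 1 : ℕ) : ℝ) * δ / m * T :=
      mul_le_mul_of_nonneg_left hTge (by positivity)
    have h2 : γ * ((k + 1 : ℕ) : ℝ) * δ / m * (10 * m * R) = 10 * ((k + 1 : ℕ) : ℝ) / w * (Δ * lg) := by
      rw [hR]; field_simp
    have h3 : 5 ≤ 10 * ((k + 1 : ℕ) : ℝ) / w := by
      rw [le_div_iff₀ (by linarith)]; linarith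
    have h4 : 5 * (Δ * lg) ≤ 10 * ((k + 1 : ℕ) : ℝ) / w * (Δ * lg) :=
      mul_le_mul_of_nonneg_right h3 (by positivity)
    linarith
  have hev' : ∀ x, Even ((G.neighborSet x).ncard) := fun x => by rw [ncard_nbr]; exact hev x
  have key := uncov_bound G hev' hd A hA u ℓ k hkℓ hgood Δ
    (fun x => by rw [ncard_nbr]; exact G.degree_le_maxDegree x) (T + 1) t
    (by rw [hmE]; omega) (n * Real.exp (-(5 * Δ * lg))) (by positivity) (by
      intro S hS
      have hcS : ((k + 1 : ℕ) : ℝ) * δ ≤ ∑ x ∈ S, dg G x := by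
        rw [← hS, ← nsmul_eq_mul]
        refine Finset.card_nsmul_le_sum _ _ _ fun x _ => ?_
        rw [hdg]; exact_mod_cast G.minDegree_le_degree x
      have hb := gq_bound G hG hd S (Real.exp (-(γ * ((k + 1 : ℕ) : ℝ) * δ / m))) (Real.exp_pos _) (by
        rw [hsum]
        have h1 := Real.add_one_le_exp (-(γ * ((k + 1 : ℕ) : ℝ) * δ / m))
        have h2 : γ * ((k + 1 : ℕ) : ℝ) * δ / m ≤ 2 * γ * ((∑ x ∈ S, dg G x) / (2 * m)) := by
          have e : 2 * γ * ((∑ x ∈ S, dg G x) / (2 * m)) = γ * (∑ x ∈ S, dg G x) / m := by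
            field_simp
          rw [e, mul_assoc]
          gcongr
        linarith) T u
      rw [hsum, ← Real.exp_nat_mul] at hb
      set E := Real.exp ((T : ℝ) * -(γ * ((k + 1 : ℕ) : ℝ) * δ / m)) with hE
      have hE1 : E ≤ Real.exp (-(5 * Δ * lg)) := by
        rw [hE, Real.exp_le_exp]; linarith
      have hE0 : 0 < E := Real.exp_pos _
      have hdu : 1 ≤ dg G u := by rw [hdg]; exact_mod_cast hpos u
      have hsq : gq G S (T + 1) u ^ 2 ≤ (n * E) ^ 2 := by
        calc gq G S (T + 1) u ^ 2 ≤ dg G u * gq G S (T + 1) u ^ 2 :=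
              le_mul_of_one_le_left (sq_nonneg _) hdu
          _ ≤ E ^ 2 * (2 * m) := hb
          _ ≤ E ^ 2 * n ^ 2 := mul_le_mul_of_nonneg_left hmn (sq_nonneg _)
          _ = _ := by ring
      have := abs_le_of_sq_le_sq hsq (by positivity)
      calc gq G S (T + 1) u ≤ n * E := (le_abs_self _).trans this
        _ ≤ _ := mul_le_mul_of_nonneg_left hE1 (by positivity))
  refine key.trans ?_
  have hnexp : (n : ℝ) = Real.exp lg := (Real.exp_log (by linarith)).symm
  have hDexp : ((Δ : ℝ)) ^ (2 * k) ≤ Real.exp (2 * Δ * lg) := by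
    have h1 : (Δ : ℝ) ≤ Real.exp Δ := by have := Real.add_one_le_exp (Δ : ℝ); linarith
    calc (Δ : ℝ) ^ (2 * k) ≤ (Real.exp Δ) ^ (2 * k) := pow_le_pow_left₀ (by positivity) h1 _
      _ = Real.exp ((2 * k : ℕ) * Δ) := (Real.exp_nat_mul _ _).symm
      _ ≤ _ := by
        rw [Real.exp_le_exp]
        push_cast at hklg ⊢
        nlinarith
  have h3 : (1 : ℝ) / (n : ℝ) ^ 3 = Real.exp (-(3 * lg)) := by
    rw [Real.exp_neg, one_div]
    congr 1
    rw [hnexp, ← Real.exp_nat_mul]; norm_num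
  rw [h3]
  push_cast
  calc (n : ℝ) * (Δ : ℝ) ^ (2 * k) * (n * Real.exp (-(5 * Δ * lg)))
      ≤ n * Real.exp (2 * Δ * lg) * (n * Real.exp (-(5 * Δ * lg))) := by gcongr
    _ = Real.exp (lg + 2 * Δ * lg + (lg + -(5 * Δ * lg))) := by
        rw [hnexp, Real.exp_add, Real.exp_add, Real.exp_add]
    _ ≤ _ := by
        rw [Real.exp_le_exp]
        nlinarith

/-- There are constants `c, C > 0` such that for every connected `ℓ`-good
graph `G` on `n` vertices and `m` edges with all degrees even, minimum degree `δ` and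
maximum degree `Δ`, setting
`τ* = C·m·(1 + Δ·log n/(δ·min(ℓ, log n)·(1 − λmax)))`,
for every rule `A` and every start vertex, the probability that some vertex of `G` remains
unvisited after `τ*` steps of the E-process is at most `c/n³`.  In particular, whenever
`Δ` is bounded by a constant `Δ₀`, we have `τ* ≤ B·n·(1 + log n/(min(ℓ, log n)·(1 − λmax)))`
for a constant `B` depending only on `Δ₀`; and `τ*` is independent of the rule `A`. -/
theorem stmt7 :
    ∃ c C : ℝ, 0 < c ∧ 0 < C ∧
      (∀ (V : Type) [Fintype V] [DecidableEq V] (G : SimpleGraph V) [DecidableRel G.Adj]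
          (ℓ : ℕ),
        G.Connected → (∀ x : V, Even (G.degree x)) → 0 < ℓ → EvenSubgraphGood G ℓ →
        ∀ A : List V → V, ValidRule G A → ∀ u : V,
          uncovProb G A u
              ⌈C * (G.edgeFinset.card : ℝ) *
                (1 + (G.maxDegree : ℝ) * Real.log (Fintype.card V) /
                  ((G.minDegree : ℝ) * min (ℓ : ℝ) (Real.log (Fintype.card V)) *
                    (1 - lambdaMax (lazyMatrix G))))⌉₊ ≤
            c / (Fintype.card V : ℝ) ^ 3) ∧
      (∀ Δ₀ : ℕ, ∃ B : ℝ, 0 < B ∧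
        ∀ (V : Type) [Fintype V] [DecidableEq V] (G : SimpleGraph V) [DecidableRel G.Adj]
            (ℓ : ℕ),
          G.Connected → (∀ x : V, Even (G.degree x)) → 0 < ℓ → EvenSubgraphGood G ℓ →
          G.maxDegree ≤ Δ₀ →
          C * (G.edgeFinset.card : ℝ) *
              (1 + (G.maxDegree : ℝ) * Real.log (Fintype.card V) /
                ((G.minDegree : ℝ) * min (ℓ : ℝ) (Real.log (Fintype.card V)) *
                  (1 - lambdaMax (lazyMatrix G)))) ≤
            B * (Fintype.card V : ℝ) *
              (1 + Real.log (Fintype.card V) /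
                (min (ℓ : ℝ) (Real.log (Fintype.card V)) *
                  (1 - lambdaMax (lazyMatrix G))))) := by
  refine ⟨1, 10, one_pos, by norm_num, ?_, ?_⟩
  · intro V _ _ G _ ℓ hG hev hℓ hgood A hA u
    rcases subsingleton_or_nontrivial V with hV | hV
    · have h0 : ∀ t, uncovProb G A u t = 0 := by
        intro t
        unfold uncovProb
        refine Finset.sum_eq_zero fun f _ => ?_
        rw [if_pos]
        intro x
        exact ⟨0, Subsingleton.elim _ _⟩
      rw [h0]
      positivity
    · exact main_bound V G ℓ hG hev hℓ hgood A hA u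
  · intro Δ₀
    refine ⟨10 * ((Δ₀ : ℝ) + 1) ^ 2, by positivity, ?_⟩
    intro V _ _ G _ ℓ hG hev hℓ hgood hΔ
    rcases subsingleton_or_nontrivial V with hV | hV
    · have hm : G.edgeFinset.card = 0 := by
        rw [Finset.card_eq_zero, SimpleGraph.edgeFinset_eq_empty]
        exact Subsingleton.elim _ _
      have : Nonempty V := hG.nonempty
      have hc : Fintype.card V = 1 := Fintype.card_eq_one_iff_nonempty_unique.mpr
        ⟨{ default := Classical.arbitrary V, uniq := fun a => Subsingleton.elim _ _ }⟩
      rw [hm, hc]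
      simp
      positivity
    · have hpos : ∀ x, 0 < G.degree x := fun x => hG.preconnected.degree_pos_of_nontrivial x
      have hdg : ∀ x, dg G x = (G.degree x : ℝ) := fun x => by rw [dg, ncard_nbr]
      have hd : ∀ x, 0 < dg G x := fun x => by rw [hdg]; exact_mod_cast hpos x
      have hδ : 1 ≤ G.minDegree := by
        obtain ⟨x, hx⟩ := G.exists_minimal_degree_vertex
        rw [hx]; exact hpos x
      have hδ' : (1 : ℝ) ≤ G.minDegree := by exact_mod_cast hδ
      have hlam := lam_lt_one G hd
      have hγ : 0 < 1 - lambdaMax (lazyMatrix G) := by linarith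
      have hΔ' : (G.maxDegree : ℝ) ≤ Δ₀ := by exact_mod_cast hΔ
      have hlog : 0 ≤ Real.log (Fintype.card V) := Real.log_natCast_nonneg _
      have hw : 0 ≤ min (ℓ : ℝ) (Real.log (Fintype.card V)) := le_min (Nat.cast_nonneg _) hlog
      have hsum : 2 * (G.edgeFinset.card : ℝ) ≤ Δ₀ * Fintype.card V := by
        have h1 : ∑ x, (G.degree x : ℝ) = 2 * (G.edgeFinset.card : ℝ) := by
          exact_mod_cast G.sum_degrees_eq_twice_card_edges
        rw [← h1]
        calc ∑ x, (G.degree x : ℝ) ≤ ∑ x : V, (Δ₀ : ℝ) := Finset.sum_le_sum fun x _ => by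
              exact_mod_cast (G.degree_le_maxDegree x).trans hΔ
          _ = _ := by simp [mul_comm]
      set m := (G.edgeFinset.card : ℝ) with hm
      set n := (Fintype.card V : ℝ) with hn
      set lg := Real.log n with hlg
      set γ := 1 - lambdaMax (lazyMatrix G) with hγd
      set w := min (ℓ : ℝ) lg with hwd
      set Y := lg / (w * γ) with hY
      have hY0 : 0 ≤ Y := by positivity
      have hn0 : 0 ≤ n := Nat.cast_nonneg _
      have hm0 : 0 ≤ m := Nat.cast_nonneg _
      have hD0 : (0 : ℝ) ≤ Δ₀ := Nat.cast_nonneg _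
      have h1 : (G.maxDegree : ℝ) * lg / (G.minDegree * w * γ) ≤ Δ₀ * Y := by
        have e : (G.maxDegree : ℝ) * lg / (G.minDegree * w * γ)
            = (G.maxDegree / G.minDegree : ℝ) * Y := by
          rw [hY, div_mul_div_comm, mul_assoc (G.minDegree : ℝ)]
        rw [e]
        refine mul_le_mul_of_nonneg_right ?_ hY0
        rw [div_le_iff₀ (by linarith)]
        nlinarith
      have h2 : 1 + (G.maxDegree : ℝ) * lg / (G.minDegree * w * γ) ≤ (Δ₀ + 1) * (1 + Y) := by
        nlinarith
      have h3 : m ≤ (Δ₀ + 1) * n := by nlinarith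
      calc _ ≤ 10 * m * ((Δ₀ + 1) * (1 + Y)) := mul_le_mul_of_nonneg_left h2 (by positivity)
        _ ≤ 10 * ((Δ₀ + 1) * n) * ((Δ₀ + 1) * (1 + Y)) := by gcongr
        _ = _ := by ring
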